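/- arXiv:math/0612717 — 3 statements merged into one kernel-verified Lean document; each statement's English description precedes it below -/
import Mathlib

section
/- (Derivative of the generalized energy along the flow.) Fix κ ∈ {+1, −1} and let a : ℝ → ℝ be a bounded measurable even function. Let I ⊆ ℝ be an open interval and let u be such that t ↦ u(t,·) is a continuously differentiable map from I into the Schwartz space 𝒮(ℝ;ℂ) that solves i∂_t u − ∂_x² u + κ|u|²u = 0 pointwise on I × ℝ. Then t ↦ E₀(u(t)) is differentiable on I and d/dt E₀(u(t)) = −2κ Im ∫_ℝ a(ξ) · (|u(t)|²u(t))^(ξ) · conj(û(t,ξ)) dξ, where (|u(t)|²u(t))^ denotes the Fourier transform in x of the function x ↦ |u(t,x)|²u(t,x). -/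
/-!
The energy is the quadratic form of a bounded operator on `L²`: if `M` denotes multiplication by
`a`, then `E₀(f) = ⟪f̂, M f̂⟫`. The Fourier transform followed by the inclusion of the Schwartz space
into `L²` is continuous and linear (`ftL2`), so `t ↦ û(t)` is differentiable in `L²` with
derivative `V̂(t)`, and the product rule for the inner product gives
`d/dt E₀(u(t)) = 2 Re ∫ a V̂ conj û`.

By the equation, `κ|u|²u = ∂ₓ²u - iV`, so `κ (|u|²u)^ = -ξ² û - i V̂`
(`ftPt_iteratedDeriv_two`). After multiplication by `a conj û` the first term is real, and hence
`-2κ Im ∫ a (|u|²u)^ conj û` equals `2 Re ∫ a V̂ conj û`. All the integrals involved converge, being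
`L²` inner products (`integrable_form`).
-/

open MeasureTheory Filter Set
open scoped ENNReal NNReal Topology

/-- The normalization constant `(2π)^(-1/2)` of the unitary Fourier transform. -/
noncomputable def fourierWeight : ℝ := (Real.sqrt (2 * Real.pi))⁻¹

/-- The pointwise Fourier integral `f̂(ξ) = (2π)^{-1/2} ∫ e^{-ixξ} f(x) dx`. -/
noncomputable def ftPt (f : ℝ → ℂ) (ξ : ℝ) : ℂ :=
  (fourierWeight : ℂ) * ∫ x : ℝ, Complex.exp (-(Complex.I * x * ξ)) * f x

/-- The generalized energy `E₀(f) = ∫ a(ξ) |f̂(ξ)|² dξ`. -/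
noncomputable def E0 (a : ℝ → ℝ) (f : ℝ → ℂ) : ℝ := ∫ ξ : ℝ, a ξ * ‖ftPt f ξ‖ ^ 2

open scoped FourierTransform

/-- The dilation `ξ ↦ ξ / (2π)` of the line, which converts the frequency variable of Mathlib's
Fourier transform (kernel `e^{-2πixξ}`) into the one of `ftPt` (kernel `e^{-ixξ}`). -/
noncomputable def dilation : ℝ ≃L[ℝ] ℝ :=
  ContinuousLinearEquiv.unitsEquivAut ℝ
    (Units.mk0 (2 * Real.pi)⁻¹ (inv_ne_zero Real.two_pi_pos.ne'))

lemma dilation_apply (ξ : ℝ) : dilation ξ = ξ * (2 * Real.pi)⁻¹ := rfl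

/-- The unitary Fourier transform `ftPt`, as a continuous linear map of the Schwartz space. -/
noncomputable def ftSchwartz : SchwartzMap ℝ ℂ →L[ℂ] SchwartzMap ℝ ℂ :=
  (fourierWeight : ℂ) • (SchwartzMap.compCLMOfContinuousLinearEquiv ℂ dilation).comp
    (SchwartzMap.fourierTransformCLM ℂ)

lemma ftPt_eq_fourier (f : ℝ → ℂ) (ξ : ℝ) :
    ftPt f ξ = (fourierWeight : ℂ) * 𝓕 f (dilation ξ) := by
  rw [ftPt, Real.fourier_real_eq_integral_exp_smul]
  congr 2
  ext x
  rw [smul_eq_mul, dilation_apply]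
  congr 2
  have h : (Real.pi : ℂ) ≠ 0 := by exact_mod_cast Real.pi_ne_zero
  push_cast
  field_simp

lemma ftSchwartz_apply (f : SchwartzMap ℝ ℂ) (ξ : ℝ) : ftSchwartz f ξ = ftPt f ξ := by
  rw [ftPt_eq_fourier]
  rfl

/-- The Fourier transform turns `∂ₓ²` into multiplication by `-ξ²`. -/
lemma ftPt_iteratedDeriv_two (f : SchwartzMap ℝ ℂ) (ξ : ℝ) :
    ftPt (iteratedDeriv 2 f) ξ = -(ξ : ℂ) ^ 2 * ftPt f ξ := by
  have hd : deriv f = SchwartzMap.derivCLM ℂ ℂ f := rfl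
  have hdd : deriv (SchwartzMap.derivCLM ℂ ℂ f) =
    SchwartzMap.derivCLM ℂ ℂ (SchwartzMap.derivCLM ℂ ℂ f) := rfl
  have h2 : 𝓕 (iteratedDeriv 2 f) (dilation ξ) = -(ξ : ℂ) ^ 2 * 𝓕 (f : ℝ → ℂ) (dilation ξ) := by
    rw [iteratedDeriv_succ, iteratedDeriv_one, hd,
      Real.fourier_deriv (SchwartzMap.integrable _) (SchwartzMap.differentiable _)
        (hdd ▸ SchwartzMap.integrable _), ← hd,
      Real.fourier_deriv (SchwartzMap.integrable _) (SchwartzMap.differentiable _)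
        (hd ▸ SchwartzMap.integrable _)]
    have h : (Real.pi : ℂ) ≠ 0 := by exact_mod_cast Real.pi_ne_zero
    simp only [smul_eq_mul, dilation_apply]
    push_cast
    field_simp
    linear_combination ((ξ : ℂ) ^ 2 * 𝓕 (f : ℝ → ℂ) (ξ / (2 * Real.pi) : ℝ)) * Complex.I_sq
  rw [ftPt_eq_fourier, ftPt_eq_fourier, h2]
  ring

/-- `ftSchwartz` followed by the inclusion of the Schwartz space into `L²`. -/
noncomputable def ftL2 : SchwartzMap ℝ ℂ →L[ℂ] Lp ℂ 2 (volume : Measure ℝ) :=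
  (SchwartzMap.toLpCLM ℂ ℂ 2 volume).comp ftSchwartz

lemma coeFn_ftL2 (f : SchwartzMap ℝ ℂ) : ftL2 f =ᵐ[volume] ftPt f := by
  filter_upwards [(ftSchwartz f).coeFn_toLp 2 volume] with ξ hξ
  rw [← ftSchwartz_apply, ← hξ]
  rfl

/-- Multiplication by a bounded measurable function is a bounded operator on `L²`. -/
lemma exists_mulOp {a : ℝ → ℝ} (ha_meas : Measurable a) (ha_bdd : ∃ Cb : ℝ, ∀ ξ : ℝ, |a ξ| ≤ Cb) :
    ∃ M : Lp ℂ 2 (volume : Measure ℝ) →L[ℂ] Lp ℂ 2 (volume : Measure ℝ),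
      ∀ w, M w =ᵐ[volume] fun ξ => (a ξ : ℂ) * w ξ := by
  obtain ⟨C, hC⟩ := ha_bdd
  have hmem : MemLp (fun ξ => (a ξ : ℂ)) ∞ (volume : Measure ℝ) :=
    memLp_top_of_bound (Complex.measurable_ofReal.comp ha_meas).aestronglyMeasurable C
      (.of_forall fun ξ => by simpa using hC ξ)
  refine ⟨(ContinuousLinearMap.mul ℂ ℂ).holderL volume ∞ 2 2 hmem.toLp, fun w => ?_⟩
  rw [ContinuousLinearMap.holderL_apply_apply]
  filter_upwards [(ContinuousLinearMap.mul ℂ ℂ).coeFn_holder (r := 2) hmem.toLp w,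
    hmem.coeFn_toLp] with ξ h1 h2
  rw [h1, h2, ContinuousLinearMap.mul_apply']

section Form

variable {a : ℝ → ℝ} {M : Lp ℂ 2 (volume : Measure ℝ) →L[ℂ] Lp ℂ 2 (volume : Measure ℝ)}

lemma inner_ftL2_ae (hM : ∀ w, M w =ᵐ[volume] fun ξ => (a ξ : ℂ) * w ξ)
    (f g : SchwartzMap ℝ ℂ) :
    (fun ξ => inner ℂ (ftL2 f ξ) (M (ftL2 g) ξ)) =ᵐ[volume]
      fun ξ => (a ξ : ℂ) * ftPt g ξ * (starRingEnd ℂ) (ftPt f ξ) := by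
  filter_upwards [hM (ftL2 g), coeFn_ftL2 f, coeFn_ftL2 g] with ξ h1 h2 h3
  rw [h1, h2, h3, RCLike.inner_apply]

lemma inner_ftL2 (hM : ∀ w, M w =ᵐ[volume] fun ξ => (a ξ : ℂ) * w ξ)
    (f g : SchwartzMap ℝ ℂ) :
    inner ℂ (ftL2 f) (M (ftL2 g)) =
      ∫ ξ : ℝ, (a ξ : ℂ) * ftPt g ξ * (starRingEnd ℂ) (ftPt f ξ) := by
  rw [L2.inner_def]
  exact integral_congr_ae (inner_ftL2_ae hM f g)

lemma integrable_form (hM : ∀ w, M w =ᵐ[volume] fun ξ => (a ξ : ℂ) * w ξ)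
    (f g : SchwartzMap ℝ ℂ) :
    Integrable fun ξ : ℝ => (a ξ : ℂ) * ftPt g ξ * (starRingEnd ℂ) (ftPt f ξ) :=
  (L2.integrable_inner (𝕜 := ℂ) (ftL2 f) (M (ftL2 g))).congr (inner_ftL2_ae hM f g)

lemma E0_eq_re_inner (hM : ∀ w, M w =ᵐ[volume] fun ξ => (a ξ : ℂ) * w ξ)
    (f : SchwartzMap ℝ ℂ) :
    E0 a f = (inner ℂ (ftL2 f) (M (ftL2 f))).re := by
  have h : ∀ ξ, (a ξ : ℂ) * ftPt f ξ * (starRingEnd ℂ) (ftPt f ξ) =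
      ((a ξ * ‖ftPt f ξ‖ ^ 2 : ℝ) : ℂ) := fun ξ => by
    rw [mul_assoc, Complex.mul_conj']
    push_cast
    rfl
  rw [inner_ftL2 hM, E0]
  simp only [h]
  rw [integral_complex_ofReal, Complex.ofReal_re]

end Form

/-- Derivative of the generalized energy along the cubic NLS flow: if `t ↦ u(t)` is a `C¹`
curve of Schwartz functions (with time derivative `V`) solving `i∂ₜu - ∂ₓ²u + κ|u|²u = 0`
pointwise on the open interval `J`, and `a` is bounded, measurable and even, then
`d/dt E₀(u(t)) = -2κ Im ∫ a(ξ) (|u(t)|²u(t))^(ξ) conj(û(t,ξ)) dξ` on `J`. -/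
theorem energy_derivative_along_flow
    (κ : ℝ) (hκ : κ = 1 ∨ κ = -1)
    (a : ℝ → ℝ) (ha_meas : Measurable a) (ha_bdd : ∃ Cb : ℝ, ∀ ξ : ℝ, |a ξ| ≤ Cb)
    (ha_even : ∀ ξ : ℝ, a (-ξ) = a ξ)
    (J : Set ℝ) (hJopen : IsOpen J) (hJconn : J.OrdConnected)
    (U V : ℝ → SchwartzMap ℝ ℂ)
    (hderiv : ∀ t ∈ J,
      Tendsto (fun h : ℝ => h⁻¹ • (U (t + h) - U t)) (𝓝[≠] (0 : ℝ)) (𝓝 (V t)))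
    (hcont : ContinuousOn V J)
    (hPDE : ∀ t ∈ J, ∀ x : ℝ,
      Complex.I * V t x - iteratedDeriv 2 (fun y => U t y) x +
        (κ : ℂ) * ((‖U t x‖ ^ 2 : ℝ) : ℂ) * U t x = 0) :
    ∀ t ∈ J,
      HasDerivAt (fun τ : ℝ => E0 a (fun x => U τ x))
        (-2 * κ *
          (∫ ξ : ℝ, (a ξ : ℂ) *
            ftPt (fun x => ((‖U t x‖ ^ 2 : ℝ) : ℂ) * U t x) ξ *
              (starRingEnd ℂ) (ftPt (fun x => U t x) ξ)).im) t := by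
  intro t ht
  obtain ⟨M, hM⟩ := exists_mulOp ha_meas ha_bdd
  -- The curve `t ↦ û(t)` is differentiable in `L²`, with derivative the transform of `V t`.
  have hw : HasDerivAt (fun τ => ftL2 (U τ)) (ftL2 (V t)) t := by
    rw [hasDerivAt_iff_tendsto_slope_zero]
    have h := (ftL2.continuous.tendsto (V t)).comp (hderiv t ht)
    refine h.congr fun s => ?_
    simp only [Function.comp_apply]
    exact ((ftL2.restrictScalars ℝ).map_smul _ _).trans (congrArg _ (map_sub ftL2 _ _))
  have hMw : HasDerivAt (fun τ => M (ftL2 (U τ))) (M (ftL2 (V t))) t :=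
    (M.restrictScalars ℝ).hasFDerivAt.comp_hasDerivAt t hw
  have hE := Complex.reCLM.hasFDerivAt.comp_hasDerivAt t (hw.inner ℂ hMw)
  have hfun : (fun τ : ℝ => E0 a (fun x => U τ x)) =
      Complex.reCLM ∘ fun τ => inner ℂ (ftL2 (U τ)) (M (ftL2 (U τ))) :=
    funext fun τ => E0_eq_re_inner hM (U τ)
  rw [hfun]
  convert! hE using 1
  set N : ℝ → ℂ := fun x => ((‖U t x‖ ^ 2 : ℝ) : ℂ) * U t x with hN
  -- By the equation, `κ |u|²u` is the Schwartz function `W = ∂ₓ²u - i ∂ₜu`.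
  let D := SchwartzMap.derivCLM ℂ ℂ (SchwartzMap.derivCLM ℂ ℂ (U t))
  have hD : (D : ℝ → ℂ) = iteratedDeriv 2 (U t) := by
    rw [iteratedDeriv_succ, iteratedDeriv_one]
    rfl
  let W : SchwartzMap ℝ ℂ := D - Complex.I • V t
  have hW : (W : ℝ → ℂ) = fun x => (κ : ℂ) * N x := by
    ext x
    have h := hPDE t ht x
    have hDx : D x = iteratedDeriv 2 (fun y => U t y) x := congrFun hD x
    change D x - Complex.I * V t x = _
    rw [hDx, hN]
    linear_combination -h
  have hWft : ∀ ξ, ftPt W ξ = (κ : ℂ) * ftPt N ξ := fun ξ => by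
    rw [hW, ftPt, ftPt, mul_left_comm, ← integral_const_mul (κ : ℂ)]
    simp only [mul_left_comm]
  have hWft' : ∀ ξ,
      ftPt W ξ = -(ξ : ℂ) ^ 2 * ftPt (U t) ξ - Complex.I * ftPt (V t) ξ := fun ξ => by
    rw [← ftPt_iteratedDeriv_two, ← hD, ← ftSchwartz_apply, ← ftSchwartz_apply,
      ← ftSchwartz_apply, map_sub, map_smul]
    rfl
  have hre : ∀ F : ℝ → ℂ, Integrable F → (∫ ξ, F ξ).re = ∫ ξ, (F ξ).re :=
    fun F hF => (integral_re hF).symm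
  have him : ∀ F : ℝ → ℂ, Integrable F → (∫ ξ, F ξ).im = ∫ ξ, (F ξ).im :=
    fun F hF => (integral_im hF).symm
  have hκint : κ * (∫ ξ : ℝ, (a ξ : ℂ) * ftPt N ξ * (starRingEnd ℂ) (ftPt (U t) ξ)).im =
      (∫ ξ : ℝ, (a ξ : ℂ) * ftPt W ξ * (starRingEnd ℂ) (ftPt (U t) ξ)).im := by
    rw [← Complex.im_ofReal_mul, ← integral_const_mul]
    refine congrArg Complex.im (integral_congr_ae (.of_forall fun ξ => ?_))
    simp only [hWft]
    ring
  rw [mul_assoc, hκint, him _ (integrable_form hM _ _)]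
  change _ = (inner ℂ (ftL2 (U t)) (M (ftL2 (V t))) + inner ℂ (ftL2 (V t)) (M (ftL2 (U t)))).re
  rw [Complex.add_re, inner_ftL2 hM, inner_ftL2 hM, hre _ (integrable_form hM _ _),
    hre _ (integrable_form hM _ _),
    ← integral_const_mul]
  refine Eq.trans ?_ (integral_add (integrable_form hM (U t) (V t)).re
    (integrable_form hM (V t) (U t)).re)
  refine integral_congr_ae (.of_forall fun ξ => ?_)
  -- The term `-ξ² û` of `Ŵ` contributes the real number `-a ξ² |û|²`, which has no imaginary part.
  simp [hWft', pow_two]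
  ring
end

section
/- (Slowly varying summable majorant.) Let ε > 0 and let c : ℕ → [0,∞) satisfy Σ_{n∈ℕ} c_n = 1. Then there exists β : ℕ → (0,∞) such that: (i) c_n ≤ β_n for all n; (ii) Σ_{n∈ℕ} β_n ≤ C(ε) for a constant C(ε) depending only on ε; and (iii) β is slowly varying in the sense that |log₂ β_n − log₂ β_m| ≤ (ε/2) |n − m| for all n, m ∈ ℕ. -/
/-!
The majorant is the convolution of `c` with a two-sided geometric kernel,
`β n = ∑ₖ r ^ |n - k| * c k` with `r = 2 ^ (-ε / 2) ∈ (0, 1)`.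
The term `k = n` gives `c n ≤ β n`, and the triangle inequality
`|m - k| ≤ |m - n| + |n - k|` gives `r ^ |m - n| * β n ≤ β m`, which after taking logarithms
is the slow variation. Exchanging sums, `∑ₙ β n` is at most `∑ₖ c k = 1` times the total mass
of the kernel, which is bounded by `(1 + r) / (1 - r)` uniformly in its centre
(`sum_pow_dist_le`).
-/

/-- The bound equals `∑_{j ≤ k} r ^ j + ∑_{i ≥ 1} r ^ i`; this sharp form, dependent on the
centre `k`, is what makes the induction on `k` close. -/
lemma sum_pow_dist_le_aux {r : ℝ} (h0 : 0 < r) (h1 : r < 1) (k N : ℕ) :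
    ∑ n ∈ Finset.range N, r ^ Nat.dist n k ≤ (1 + r - r ^ (k + 1)) / (1 - r) := by
  have hr : 0 < 1 - r := by linarith
  induction k generalizing N with
  | zero =>
    have h : ∑ n ∈ Finset.range N, r ^ Nat.dist n 0 = ∑ n ∈ Finset.range N, r ^ n := by
      simp [Nat.dist]
    rw [h, le_div_iff₀ hr, geom_sum_mul_neg]
    have := pow_pos h0 N
    simp only [zero_add, pow_one]
    linarith
  | succ k ih =>
    cases N with
    | zero =>
      have := pow_le_one₀ h0.le h1.le (n := k + 1 + 1)
      simp only [Finset.range_zero, Finset.sum_empty]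
      exact div_nonneg (by linarith) hr.le
    | succ N =>
      rw [Finset.sum_range_succ']
      have h : ∀ n, Nat.dist (n + 1) (k + 1) = Nat.dist n k := by
        intro n; unfold Nat.dist; omega
      have h' : Nat.dist 0 (k + 1) = k + 1 := by simp [Nat.dist]
      simp only [h, h']
      have e : (1 + r - r ^ (k + 1 + 1)) / (1 - r)
          = (1 + r - r ^ (k + 1)) / (1 - r) + r ^ (k + 1) := by
        field_simp
        ring
      rw [e]
      linarith [ih N]

lemma sum_pow_dist_le {r : ℝ} (h0 : 0 < r) (h1 : r < 1) (k N : ℕ) :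
    ∑ n ∈ Finset.range N, r ^ Nat.dist n k ≤ (1 + r) / (1 - r) := by
  refine (sum_pow_dist_le_aux h0 h1 k N).trans ?_
  have := pow_pos h0 (k + 1)
  exact div_le_div_of_nonneg_right (by linarith) (by linarith)

/-- Slowly varying summable majorant: for every `ε > 0` there is `C(ε)` such that any
nonnegative sequence `c` with `Σ c_n = 1` admits a positive majorant `β` with `Σ β_n ≤ C(ε)`
which is slowly varying: `|log₂ β_n - log₂ β_m| ≤ (ε/2)|n - m|`. -/
theorem slowly_varying_majorant (ε : ℝ) (hε : 0 < ε) :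
    ∃ C : ℝ, ∀ c : ℕ → ℝ, (∀ n, 0 ≤ c n) → HasSum c 1 →
      ∃ β : ℕ → ℝ,
        (∀ n, 0 < β n) ∧
        (∀ n, c n ≤ β n) ∧
        Summable β ∧ (∑' n, β n) ≤ C ∧
        (∀ n m : ℕ, |Real.logb 2 (β n) - Real.logb 2 (β m)| ≤ ε / 2 * |(n : ℝ) - (m : ℝ)|) := by
  obtain ⟨r, h0, h1, hlog⟩ : ∃ r : ℝ, 0 < r ∧ r < 1 ∧ Real.logb 2 r = -(ε / 2) :=
    ⟨2 ^ (-(ε / 2)), by positivity,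
      Real.rpow_lt_one_of_one_lt_of_neg (by norm_num) (by linarith),
      Real.logb_rpow (by norm_num) (by norm_num)⟩
  refine ⟨(1 + r) / (1 - r), fun c hc hsum => ?_⟩
  have hnn : ∀ n k, 0 ≤ r ^ Nat.dist n k * c k := fun n k => mul_nonneg (by positivity) (hc k)
  have hs : ∀ n, Summable fun k => r ^ Nat.dist n k * c k := fun n =>
    Summable.of_nonneg_of_le (hnn n)
      (fun k => mul_le_of_le_one_left (hc k) (pow_le_one₀ h0.le h1.le)) hsum.summable
  set β : ℕ → ℝ := fun n => ∑' k, r ^ Nat.dist n k * c k with hβ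
  have hβ0 : ∀ n, 0 ≤ β n := fun n => tsum_nonneg (hnn n)
  have hpos : ∀ n, 0 < β n := by
    intro n
    -- Since `∑ c = 1`, some `c k` is nonzero, and its contribution is already positive.
    obtain ⟨k, hk⟩ : ∃ k, c k ≠ 0 := by
      by_contra! h
      have hz : c = 0 := funext h
      rw [hz] at hsum
      exact zero_ne_one (hasSum_zero.unique hsum)
    exact (hs n).tsum_pos (hnn n) k (mul_pos (by positivity) ((hc k).lt_of_ne' hk))
  have hpart : ∀ N, ∑ n ∈ Finset.range N, β n ≤ (1 + r) / (1 - r) := by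
    intro N
    have hswap : ∑ n ∈ Finset.range N, β n
        = ∑' k, ∑ n ∈ Finset.range N, r ^ Nat.dist n k * c k :=
      (Summable.tsum_finsetSum fun n _ => hs n).symm
    rw [hswap]
    have hC := hsum.mul_left ((1 + r) / (1 - r))
    rw [mul_one] at hC
    refine hasSum_le (fun k => ?_) (summable_sum fun n _ => hs n).hasSum hC
    rw [← Finset.sum_mul]
    exact mul_le_mul_of_nonneg_right (sum_pow_dist_le h0 h1 k N) (hc k)
  have hvar : ∀ n m, r ^ Nat.dist m n * β n ≤ β m := by
    intro n m
    rw [hβ]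
    simp only
    rw [← tsum_mul_left]
    refine ((hs n).mul_left _).tsum_le_tsum (fun k => ?_) (hs m)
    rw [← mul_assoc, ← pow_add]
    exact mul_le_mul_of_nonneg_right
      (pow_le_pow_of_le_one h0.le h1.le (Nat.dist.triangle_inequality m n k)) (hc k)
  have hdist : ∀ n m : ℕ, ((Nat.dist m n : ℕ) : ℝ) = |(n : ℝ) - m| := by
    intro n m
    rcases le_total n m with h | h
    · rw [Nat.dist_eq_sub_of_le_right h, Nat.cast_sub h, abs_sub_comm, abs_of_nonneg]
      exact sub_nonneg.2 (by exact_mod_cast h)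
    · rw [Nat.dist_eq_sub_of_le h, Nat.cast_sub h, abs_of_nonneg]
      exact sub_nonneg.2 (by exact_mod_cast h)
  have hone : ∀ n m : ℕ,
      Real.logb 2 (β n) - Real.logb 2 (β m) ≤ ε / 2 * |(n : ℝ) - (m : ℝ)| := by
    intro n m
    have h := Real.logb_le_logb_of_le (b := 2) (by norm_num)
      (mul_pos (pow_pos h0 _) (hpos n)) (hvar n m)
    rw [Real.logb_mul (pow_pos h0 _).ne' (hpos n).ne', Real.logb_pow, hlog, hdist] at h
    linarith
  refine ⟨β, hpos, fun n => ?_, summable_of_sum_range_le hβ0 hpart,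
    Real.tsum_le_of_sum_range_le hβ0 hpart, fun n m => abs_le.2 ⟨?_, hone n m⟩⟩
  · have h := (hs n).le_tsum n fun k _ => hnn n k
    simpa [Nat.dist_self] using h
  · have h := hone m n
    rw [abs_sub_comm] at h
    linarith
end

section
/- (Embedding of the variation space into the larger atomic space.) Let H be a complex Hilbert space and 1 ≤ p < q < ∞. There is a constant C, depending only on p and q, such that every right-continuous function u : ℝ → H with ‖u‖_{V^p} < ∞ and lim_{t→−∞} u(t) = 0 belongs to U^q(ℝ;H) and satisfies ‖u‖_{U^q} ≤ C ‖u‖_{V^p}. -/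
/-! The proof is by dyadic approximation. Let `A = ‖u‖_{V^p}`. The `p`-variation `G(x)` of `u` on
`(-∞, x]` satisfies `0 ≤ G ≤ A ^ p` and `‖u x - u y‖ ^ p ≤ G y - G x` for `x < y`
(`exists_variation_function`). Hence, if the real line is cut at the first times where `G` reaches
the multiples of `δ ^ p`, right-continuity makes `u` oscillate by at most `δ` on each piece, and
`u` is uniformly within `δ` of a step function with at most `(A / δ) ^ p + 1` jumps
(`exists_step_approx`).

Let `v_n` be this approximation for `δ = 2^{-n} A`, with `v_0 = 0`. The difference `v_{n+1} - v_n`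
is a step function with at most `4 * 2 ^ ((n+1) p)` jumps and values of size at most `2^{1-n} A`,
so it is a multiple of a `U^q` atom (`AdaptedTo.isUpAtom`) with coefficient
`O(A 2 ^ (n (p/q - 1)))`. As `p < q`, these coefficients are summable, and the telescoping series
`u = ∑ (v_{n+1} - v_n)` is the required atomic representation (`UpNorm_le_of_bounds`). -/

open MeasureTheory Set Filter
open scoped ENNReal NNReal Topology

variable {H : Type*} [NormedAddCommGroup H] [InnerProductSpace ℂ H] [CompleteSpace H]

/-- A `U^p` atom: a step function `Σ_k 1_{[t_k,t_{k+1})} φ_k` along a finite increasing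
sequence of times (the last step extending to `+∞`, possibly with value `0`), with
`Σ_k ‖φ_k‖^p ≤ 1`. -/
def IsUpAtom (p : ℝ) (a : ℝ → H) : Prop :=
  ∃ (N : ℕ) (t : ℕ → ℝ) (φ : ℕ → H),
    (∀ i < N, t i < t (i + 1)) ∧
    (∑ k ∈ Finset.range (N + 1), ‖φ k‖ ^ p) ≤ 1 ∧
    ∀ x : ℝ, a x =
      (∑ k ∈ Finset.range N, Set.indicator (Set.Ico (t k) (t (k + 1))) (fun _ => φ k) x) +
        Set.indicator (Set.Ici (t N)) (fun _ => φ N) x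

/-- The atomic `U^p` norm: the infimum of `Σ_j |c_j|` over all representations
`u = Σ_j c_j a_j` as a pointwise absolutely convergent sum of `U^p` atoms;
it is `∞` when no such representation exists (i.e. when `u ∉ U^p`). -/
noncomputable def UpNorm (p : ℝ) (u : ℝ → H) : ℝ≥0∞ :=
  ⨅ (c : ℕ → ℂ) (A : ℕ → ℝ → H) (_ : ∀ j, IsUpAtom p (A j))
    (_ : Summable fun j => ‖c j‖) (_ : ∀ x : ℝ, HasSum (fun j => c j • A j x) (u x)),
      ENNReal.ofReal (∑' j, ‖c j‖)

/-- The `p`-variation norm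
`‖u‖_{V^p} = ( sup_t ‖u(t)‖^p + sup_{t₀<…<t_N} Σ_k ‖u(t_k) - u(t_{k+1})‖^p )^{1/p}`. -/
noncomputable def VpNorm (p : ℝ) (u : ℝ → H) : ℝ≥0∞ :=
  ((⨆ t : ℝ, (‖u t‖₊ : ℝ≥0∞) ^ p) +
      ⨆ (N : ℕ) (t : ℕ → ℝ) (_ : StrictMono t),
        ∑ k ∈ Finset.range N, (‖u (t k) - u (t (k + 1))‖₊ : ℝ≥0∞) ^ p) ^ (1 / p)

/-! ### Step functions with prescribed jump times -/

/-- `v` is a right-continuous step function jumping only at points of `F`: it is constant on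
every `[x, y]` with no point of `F` in `(x, y]`, and vanishes to the left of `F`. -/
def AdaptedTo (F : Finset ℝ) (v : ℝ → H) : Prop :=
  (∀ x y, x ≤ y → (∀ s ∈ F, ¬ (x < s ∧ s ≤ y)) → v x = v y) ∧
    ∀ x, (∀ s ∈ F, x < s) → v x = 0

omit [InnerProductSpace ℂ H] [CompleteSpace H] in
lemma AdaptedTo.mono {F G : Finset ℝ} {v : ℝ → H} (h : AdaptedTo F v) (hFG : F ⊆ G) :
    AdaptedTo G v :=
  ⟨fun x y hxy hs => h.1 x y hxy fun s hsF => hs s (hFG hsF),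
    fun x hs => h.2 x fun s hsF => hs s (hFG hsF)⟩

omit [InnerProductSpace ℂ H] [CompleteSpace H] in
/-- A step function with values of norm at most `r` and jump set `F` is a `U^q` atom as soon as
`#F * r ^ q ≤ 1`. -/
lemma AdaptedTo.isUpAtom {F : Finset ℝ} {a : ℝ → H} {q r : ℝ} (hF : F.Nonempty) (hq : 0 ≤ q)
    (h : AdaptedTo F a) (hr : ∀ x, ‖a x‖ ≤ r) (hcard : (F.card : ℝ) * r ^ q ≤ 1) :
    IsUpAtom q a := by
  obtain ⟨N, hN⟩ : ∃ N, F.card = N + 1 := ⟨F.card - 1, by have := hF.card_pos; omega⟩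
  let e := F.orderEmbOfFin hN
  let t : ℕ → ℝ := fun k => if hk : k < N + 1 then e ⟨k, hk⟩ else 0
  have htlt : ∀ i j, i < j → j ≤ N → t i < t j := by
    intro i j hij hj
    have hi' : i < N + 1 := by omega
    have hj' : j < N + 1 := by omega
    simp only [t, hi', hj', dif_pos]
    exact e.strictMono (by simpa using hij)
  have htle : ∀ i j, i ≤ j → j ≤ N → t i ≤ t j := by
    intro i j hij hj
    rcases hij.eq_or_lt with rfl | hlt
    · exact le_rfl
    · exact (htlt i j hlt hj).le
  have htF : ∀ s ∈ F, ∃ k ≤ N, t k = s := by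
    intro s hs
    have : s ∈ Set.range e := by simpa [e, Finset.range_orderEmbOfFin] using hs
    obtain ⟨k, hk⟩ := this
    refine ⟨k, by omega, ?_⟩
    have : (k : ℕ) < N + 1 := k.2
    simp only [t, this, dif_pos]
    exact hk
  refine ⟨N, t, fun k => a (t k), fun i hi => htlt i (i + 1) (by omega) (by omega), ?_, ?_⟩
  · calc ∑ k ∈ Finset.range (N + 1), ‖a (t k)‖ ^ q
        ≤ ∑ k ∈ Finset.range (N + 1), r ^ q :=
          Finset.sum_le_sum fun k _ => Real.rpow_le_rpow (norm_nonneg _) (hr _) hq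
      _ = (F.card : ℝ) * r ^ q := by rw [hN]; simp
      _ ≤ 1 := hcard
  · intro x
    by_cases hx : t 0 ≤ x
    · -- `k` indexes the last jump time not exceeding `x`.
      obtain ⟨k, hkN, hkx, hkmax⟩ : ∃ k ≤ N, t k ≤ x ∧ ∀ j, k < j → j ≤ N → x < t j := by
        refine ⟨Nat.findGreatest (fun k => t k ≤ x) N, Nat.findGreatest_le N, ?_, ?_⟩
        · exact Nat.findGreatest_spec (P := fun k => t k ≤ x) (Nat.zero_le N) hx
        · intro j hj hjN
          exact not_le.1 (Nat.findGreatest_is_greatest hj hjN)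
      have hax : a (t k) = a x := by
        refine h.1 _ _ hkx ?_
        rintro s hs ⟨h1, h2⟩
        obtain ⟨j, hjN, rfl⟩ := htF s hs
        rcases lt_or_ge k j with hkj | hkj
        · exact absurd h2 (not_le.2 (hkmax j hkj hjN))
        · exact absurd h1 (not_lt.2 (htle j k hkj hkN))
      have hzero : ∀ j ∈ Finset.range N, j ≠ k →
          Set.indicator (Set.Ico (t j) (t (j + 1))) (fun _ => a (t j)) x = 0 := by
        intro j hj hjk
        have hj' := Finset.mem_range.1 hj
        refine Set.indicator_of_notMem ?_ _
        rintro ⟨h1, h2⟩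
        rcases lt_or_gt_of_ne hjk with hlt | hgt
        · exact absurd h2 (not_lt.2 ((htle (j + 1) k hlt hkN).trans hkx))
        · exact absurd h1 (not_le.2 (hkmax j hgt hj'.le))
      rcases hkN.eq_or_lt with rfl | hlt
      · rw [Finset.sum_eq_zero fun j hj => hzero j hj (Finset.mem_range.1 hj).ne,
          Set.indicator_of_mem (Set.mem_Ici.2 hkx), zero_add]
        exact hax.symm
      · have hmem : x ∈ Set.Ico (t k) (t (k + 1)) := ⟨hkx, hkmax (k + 1) (by omega) hlt⟩
        rw [Finset.sum_eq_single_of_mem k (Finset.mem_range.2 hlt) hzero,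
          Set.indicator_of_mem hmem,
          Set.indicator_of_notMem (by simpa using hkmax N hlt le_rfl), add_zero]
        exact hax.symm
    · have hlt : ∀ j ≤ N, x < t j := fun j hj =>
        (not_le.1 hx).trans_le (htle 0 j (Nat.zero_le j) hj)
      rw [Finset.sum_eq_zero, Set.indicator_of_notMem (by simpa using hlt N le_rfl), add_zero,
        h.2 x]
      · intro s hs
        obtain ⟨j, hj, rfl⟩ := htF s hs
        exact hlt j hj
      · intro j hj
        refine Set.indicator_of_notMem ?_ _
        rintro ⟨h1, -⟩
        exact absurd h1 (not_le.2 (hlt j (Finset.mem_range.1 hj).le))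

/-! ### The variation function -/

omit [InnerProductSpace ℂ H] [CompleteSpace H] in
/-- The `p`-variation of `u` on `(-∞, x]`, as a function of `x`, is a bounded function `G` whose
increments dominate the `p`-th powers of the increments of `u`. -/
lemma exists_variation_function {p K : ℝ} {u : ℝ → H}
    (hK : ∀ (N : ℕ) (t : ℕ → ℝ), StrictMono t →
      ∑ k ∈ Finset.range N, ‖u (t k) - u (t (k + 1))‖ ^ p ≤ K) :
    ∃ G : ℝ → ℝ, (∀ x, 0 ≤ G x) ∧ (∀ x, G x ≤ K) ∧
      ∀ x y, x < y → G x + ‖u x - u y‖ ^ p ≤ G y := by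
  -- Only partitions whose last point is `x` itself are used, so that appending a point `y > x`
  -- gives superadditivity directly.
  let S : ℝ → Set ℝ := fun x => {s | ∃ (N : ℕ) (t : ℕ → ℝ), StrictMono t ∧ t N = x ∧
    s = ∑ k ∈ Finset.range N, ‖u (t k) - u (t (k + 1))‖ ^ p}
  have hzero : ∀ x, (0 : ℝ) ∈ S x := fun x =>
    ⟨0, fun i => x + i, fun i j hij => by simpa using hij, by simp, by simp⟩
  have hle : ∀ x, ∀ s ∈ S x, s ≤ K := by
    rintro x s ⟨N, t, ht, -, rfl⟩
    exact hK N t ht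
  have hbdd : ∀ x, BddAbove (S x) := fun x => ⟨K, hle x⟩
  refine ⟨fun x => sSup (S x), fun x => le_csSup (hbdd x) (hzero x),
    fun x => csSup_le ⟨0, hzero x⟩ (hle x), fun x y hxy => ?_⟩
  rw [← le_sub_iff_add_le]
  refine csSup_le ⟨0, hzero x⟩ ?_
  rintro s ⟨N, t, ht, htN, rfl⟩
  rw [le_sub_iff_add_le]
  let t' : ℕ → ℝ := fun i => if i ≤ N then t i else y + ((i : ℝ) - (N + 1))
  have ht' : StrictMono t' := by
    refine strictMono_nat_of_lt_succ fun i => ?_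
    simp only [t']
    rcases lt_trichotomy i N with hi | rfl | hi
    · rw [if_pos hi.le, if_pos (by omega)]
      exact ht (Nat.lt_succ_self i)
    · rw [if_pos le_rfl, if_neg (by omega), htN]
      push_cast
      linarith
    · rw [if_neg (by omega), if_neg (by omega)]
      push_cast
      linarith
  have hN' : t' N = x := by simp [t', htN]
  have hN1 : t' (N + 1) = y := by simp [t']
  refine le_csSup (hbdd y) ⟨N + 1, t', ht', hN1, ?_⟩
  rw [Finset.sum_range_succ, hN', hN1]
  congr 1
  refine Finset.sum_congr rfl fun k hk => ?_
  have hk' := Finset.mem_range.1 hk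
  simp only [t']
  rw [if_pos hk'.le, if_pos (by omega)]

/-! ### Uniform approximation by step functions -/

omit [InnerProductSpace ℂ H] [CompleteSpace H] in
/-- A right-continuous `u` with `p`-variation at most `K` and limit `0` at `-∞` is within `δ` of
a step function with at most `K / δ ^ p + 1` jumps. The jump times are the first times at which
the variation function reaches the multiples of `δ ^ p`. -/
lemma exists_step_approx {p K δ : ℝ} {u : ℝ → H} (hp : 0 < p) (hδ : 0 < δ)
    (hrc : ∀ t : ℝ, ContinuousWithinAt u (Set.Ici t) t) (hlim : Tendsto u atBot (𝓝 (0 : H)))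
    (hK : ∀ (N : ℕ) (t : ℕ → ℝ), StrictMono t →
      ∑ k ∈ Finset.range N, ‖u (t k) - u (t (k + 1))‖ ^ p ≤ K) :
    ∃ (F : Finset ℝ) (v : ℝ → H), F.Nonempty ∧ (F.card : ℝ) ≤ K / δ ^ p + 1 ∧ AdaptedTo F v ∧
      ∀ x, ‖u x - v x‖ ≤ δ := by
  obtain ⟨G, hG0, hGK, hG⟩ := exists_variation_function hK
  have hδp : 0 < δ ^ p := Real.rpow_pos_of_pos hδ p
  have hK0 : 0 ≤ K := (hG0 0).trans (hGK 0)
  have hGmono : ∀ x y, x ≤ y → G x ≤ G y := by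
    intro x y hxy
    rcases hxy.eq_or_lt with rfl | hlt
    · exact le_rfl
    · have := hG x y hlt
      have := Real.rpow_nonneg (norm_nonneg (u x - u y)) p
      linarith
  let τ : ℕ → ℝ := fun m => sInf {x | m * δ ^ p ≤ G x}
  let F : Finset ℝ := (Finset.range (⌊K / δ ^ p⌋₊ + 1)).image τ
  -- An increment larger than `δ` forces a jump time in between.
  have key : ∀ x y, x < y → δ < ‖u x - u y‖ → ∃ s ∈ F, x ≤ s ∧ s ≤ y := by
    intro x y hxy hlt
    have h1 : δ ^ p < ‖u x - u y‖ ^ p := Real.rpow_lt_rpow hδ.le hlt hp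
    have h2 := hG x y hxy
    let m := ⌊G y / δ ^ p⌋₊
    have hmy : m * δ ^ p ≤ G y :=
      (le_div_iff₀ hδp).1 (Nat.floor_le (div_nonneg (hG0 y) hδp.le))
    have hmx : G x < m * δ ^ p := by
      have := (div_lt_iff₀ hδp).1 (Nat.lt_floor_add_one (G y / δ ^ p))
      have : G y < (m + 1) * δ ^ p := this
      linarith
    have hlow : ∀ z, m * δ ^ p ≤ G z → x ≤ z := by
      intro z hz
      by_contra! hzx
      exact absurd (hGmono z x hzx.le) (not_le.2 (hmx.trans_le hz))
    refine ⟨τ m, Finset.mem_image_of_mem _ (Finset.mem_range.2 (Nat.lt_succ_of_le ?_)),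
      le_csInf ⟨y, hmy⟩ hlow, csInf_le ⟨x, hlow⟩ hmy⟩
    exact Nat.floor_le_floor (div_le_div_of_nonneg_right (hGK y) hδp.le)
  -- By right-continuity the jump time can be taken strictly after the left endpoint.
  have key' : ∀ x y, x ≤ y → (∀ s ∈ F, ¬ (x < s ∧ s ≤ y)) → ‖u x - u y‖ ≤ δ := by
    intro x y hxy hs
    by_contra! hlt
    have hxy' : x < y := by
      refine lt_of_le_of_ne hxy ?_
      rintro rfl
      simp at hlt
      linarith
    have hc : Tendsto (fun z => ‖u z - u y‖) (𝓝[>] x) (𝓝 ‖u x - u y‖) :=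
      (((hrc x).mono Set.Ioi_subset_Ici_self).sub tendsto_const_nhds).norm
    have h1 : ∀ᶠ z in 𝓝[>] x, δ < ‖u z - u y‖ := hc.eventually (lt_mem_nhds hlt)
    have h2 : ∀ᶠ z in 𝓝[>] x, z ∈ Set.Ioo x y := Ioo_mem_nhdsGT hxy'
    obtain ⟨z, hz1, hz2⟩ := (h1.and h2).exists
    obtain ⟨s, hsF, hs1, hs2⟩ := key z y hz2.2 hz1
    exact hs s hsF ⟨hz2.1.trans_le hs1, hs2⟩
  have key0 : ∀ x, (∀ s ∈ F, x < s) → ‖u x‖ ≤ δ := by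
    intro x hs
    by_contra! hlt
    have hc : Tendsto (fun z => ‖u z - u x‖) atBot (𝓝 ‖(0 : H) - u x‖) :=
      (hlim.sub tendsto_const_nhds).norm
    rw [zero_sub, norm_neg] at hc
    obtain ⟨z, hz1, hz2⟩ := ((hc.eventually (lt_mem_nhds hlt)).and
      (eventually_lt_atBot x)).exists
    obtain ⟨s, hsF, hs1, hs2⟩ := key z x hz2 hz1
    exact absurd hs2 (not_le.2 (hs s hsF))
  let v : ℝ → H := fun x =>
    if h : (F.filter (· ≤ x)).Nonempty then u ((F.filter (· ≤ x)).max' h) else 0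
  refine ⟨F, v, by simp [F], ?_, ⟨?_, ?_⟩, ?_⟩
  · calc (F.card : ℝ) ≤ ((⌊K / δ ^ p⌋₊ + 1 : ℕ) : ℝ) := by
          exact_mod_cast Finset.card_image_le.trans (by simp)
      _ ≤ K / δ ^ p + 1 := by
          push_cast
          have := Nat.floor_le (div_nonneg hK0 hδp.le)
          linarith
  · intro x y hxy hs
    have : F.filter (· ≤ x) = F.filter (· ≤ y) := by
      refine Finset.filter_congr fun s hsF => ⟨fun h => h.trans hxy, fun h => ?_⟩
      by_contra! hlt
      exact hs s hsF ⟨hlt, h⟩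
    simp only [v, this]
  · intro x hs
    have : ¬ (F.filter (· ≤ x)).Nonempty := by
      rintro ⟨s, hsm⟩
      obtain ⟨h1, h2⟩ := Finset.mem_filter.1 hsm
      exact absurd h2 (not_le.2 (hs s h1))
    simp only [v, this, dif_neg, not_false_iff]
  · intro x
    by_cases h : (F.filter (· ≤ x)).Nonempty
    · simp only [v, h, dif_pos]
      rw [norm_sub_rev]
      refine key' _ _ (Finset.mem_filter.1 (Finset.max'_mem _ h)).2 ?_
      rintro s hsF ⟨h1, h2⟩
      exact absurd (Finset.le_max' _ s (Finset.mem_filter.2 ⟨hsF, h2⟩)) (not_le.2 h1)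
    · simp only [v, h, dif_neg, not_false_iff, sub_zero]
      refine key0 x fun s hsF => ?_
      by_contra! hsx
      exact h ⟨s, Finset.mem_filter.2 ⟨hsF, hsx⟩⟩

/-! ### The dyadic decomposition -/

/-- The bound for a function whose supremum and `p`-variation are controlled by `A > 0`.
The constant `2 * D / (1 - b / 2)`, with `b = 2 ^ (p/q) < 2` and `D = 4 ^ (1/q) * b`, comes from
summing the geometric series of coefficients `2 * D * A * (b / 2) ^ n`. -/
lemma UpNorm_le_of_bounds {p q A : ℝ} (hp1 : 1 ≤ p) (hpq : p < q) (hA : 0 < A) {u : ℝ → H}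
    (hrc : ∀ t : ℝ, ContinuousWithinAt u (Set.Ici t) t) (hlim : Tendsto u atBot (𝓝 (0 : H)))
    (hsup : ∀ x, ‖u x‖ ≤ A)
    (hK : ∀ (N : ℕ) (t : ℕ → ℝ), StrictMono t →
      ∑ k ∈ Finset.range N, ‖u (t k) - u (t (k + 1))‖ ^ p ≤ A ^ p) :
    UpNorm q u ≤ ENNReal.ofReal
      (2 * ((4 : ℝ) ^ (1 / q) * 2 ^ (p / q)) / (1 - (2 : ℝ) ^ (p / q) / 2) * A) := by
  have hp0 : 0 < p := by linarith
  have hq0 : 0 < q := by linarith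
  -- At scale `n = 0` the zero function already approximates `u` within `A`.
  have hstep : ∀ n : ℕ, ∃ (F : Finset ℝ) (v : ℝ → H), F.Nonempty ∧
      (F.card : ℝ) ≤ ((2 : ℝ) ^ p) ^ n + 1 ∧ AdaptedTo F v ∧
      (∀ x, ‖u x - v x‖ ≤ A / 2 ^ n) ∧ (n = 0 → ∀ x, v x = 0) := by
    intro n
    rcases Nat.eq_zero_or_pos n with rfl | hn
    · exact ⟨{0}, fun _ => 0, by simp, by norm_num,
        ⟨fun _ _ _ _ => rfl, fun _ _ => rfl⟩, by simpa using hsup, fun _ _ => rfl⟩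
    · obtain ⟨F, v, h1, h2, h3, h4⟩ :=
        exists_step_approx hp0 (show 0 < A / 2 ^ n by positivity) hrc hlim hK
      refine ⟨F, v, h1, ?_, h3, h4, fun h => absurd h hn.ne'⟩
      have : A ^ p / (A / 2 ^ n) ^ p = ((2 : ℝ) ^ p) ^ n := by
        rw [← Real.div_rpow hA.le (by positivity), div_div_cancel₀ hA.ne', ← Real.rpow_natCast,
          ← Real.rpow_natCast, ← Real.rpow_mul (by norm_num), ← Real.rpow_mul (by norm_num),
          mul_comm]
      rwa [this] at h2
  choose F v hFne hFcard hFv huv hv0 using hstep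
  set b : ℝ := (2 : ℝ) ^ (p / q) with hb
  set D : ℝ := (4 : ℝ) ^ (1 / q) * b with hD
  have hb0 : 0 < b := Real.rpow_pos_of_pos (by norm_num) _
  have hD0 : 0 < D := by positivity
  have hb2 : b / 2 < 1 := by
    have : b < 2 ^ (1 : ℝ) :=
      Real.rpow_lt_rpow_of_exponent_lt (by norm_num) ((div_lt_one hq0).2 hpq)
    rw [Real.rpow_one] at this
    linarith
  have hbq : b ^ q = (2 : ℝ) ^ p := by
    rw [hb, ← Real.rpow_mul (by norm_num), div_mul_cancel₀ _ hq0.ne']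
  have hDq : ∀ n : ℕ, (D * b ^ n) ^ q = 4 * ((2 : ℝ) ^ p) ^ (n + 1) := by
    intro n
    rw [Real.mul_rpow hD0.le (by positivity), hD, Real.mul_rpow (by positivity) hb0.le,
      ← Real.rpow_mul (by norm_num), one_div_mul_cancel hq0.ne', Real.rpow_one,
      ← Real.rpow_pow_comm hb0.le, hbq]
    ring
  let c : ℕ → ℝ := fun n => 2 * D * A * (b / 2) ^ n
  have hc0 : ∀ n, 0 < c n := fun n => by positivity
  have hd : ∀ n x, ‖v (n + 1) x - v n x‖ ≤ 2 * A / 2 ^ n := by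
    intro n x
    have h1 := huv n x
    have h2 := huv (n + 1) x
    have h3 : A / 2 ^ (n + 1) ≤ A / 2 ^ n :=
      div_le_div_of_nonneg_left hA.le (by positivity)
        (pow_le_pow_right₀ (by norm_num) (Nat.le_succ n))
    calc ‖v (n + 1) x - v n x‖ = ‖(u x - v n x) - (u x - v (n + 1) x)‖ := by congr 1; abel
      _ ≤ ‖u x - v n x‖ + ‖u x - v (n + 1) x‖ := norm_sub_le _ _
      _ ≤ A / 2 ^ n + A / 2 ^ n := by linarith
      _ = 2 * A / 2 ^ n := by ring
  let a : ℕ → ℝ → H := fun n x => ((c n : ℂ)⁻¹) • (v (n + 1) x - v n x)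
  have hca : ∀ n x, (c n : ℂ) • a n x = v (n + 1) x - v n x := fun n x =>
    smul_inv_smul₀ (by exact_mod_cast (hc0 n).ne') _
  have hatom : ∀ n, IsUpAtom q (a n) := by
    intro n
    have hL := (hFv n).mono (Finset.subset_union_left (s₂ := F (n + 1)))
    have hR := (hFv (n + 1)).mono (Finset.subset_union_right (s₁ := F n))
    refine AdaptedTo.isUpAtom (F := F n ∪ F (n + 1)) (r := (D * b ^ n)⁻¹)
      ((hFne n).mono Finset.subset_union_left) hq0.le ⟨?_, ?_⟩ ?_ ?_
    · intro x y hxy hs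
      simp only [a, hL.1 x y hxy hs, hR.1 x y hxy hs]
    · intro x hs
      simp only [a, hL.2 x hs, hR.2 x hs, sub_zero, smul_zero]
    · intro x
      simp only [a]
      rw [norm_smul, norm_inv, Complex.norm_real, Real.norm_of_nonneg (hc0 n).le]
      calc (c n)⁻¹ * ‖v (n + 1) x - v n x‖ ≤ (c n)⁻¹ * (2 * A / 2 ^ n) :=
            mul_le_mul_of_nonneg_left (hd n x) (inv_nonneg.2 (hc0 n).le)
        _ = (D * b ^ n)⁻¹ := by
            simp only [c, div_pow]
            field_simp
    · rw [Real.inv_rpow (by positivity), hDq, ← div_eq_mul_inv, div_le_one (by positivity)]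
      have h2p : 1 ≤ (2 : ℝ) ^ p := Real.one_le_rpow (by norm_num) hp0.le
      have h1 : ((F n ∪ F (n + 1)).card : ℝ) ≤ (F n).card + (F (n + 1)).card := by
        exact_mod_cast Finset.card_union_le _ _
      have h2 := hFcard n
      have h3 := hFcard (n + 1)
      have h4 : ((2 : ℝ) ^ p) ^ n ≤ ((2 : ℝ) ^ p) ^ (n + 1) :=
        pow_le_pow_right₀ h2p (Nat.le_succ n)
      have h5 : 1 ≤ ((2 : ℝ) ^ p) ^ (n + 1) := one_le_pow₀ h2p
      linarith
  have hcnorm : (fun n => ‖(c n : ℂ)‖) = c := by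
    funext n
    rw [Complex.norm_real, Real.norm_of_nonneg (hc0 n).le]
  have hcsum : HasSum c (2 * D / (1 - b / 2) * A) := by
    have := (hasSum_geometric_of_lt_one (by positivity) hb2).mul_left (2 * D * A)
    have h : 2 * D / (1 - b / 2) * A = 2 * D * A * (1 - b / 2)⁻¹ := by
      rw [div_eq_mul_inv]
      ring
    rwa [h]
  have hsum : ∀ x : ℝ, HasSum (fun n => (c n : ℂ) • a n x) (u x) := by
    intro x
    simp only [hca]
    have hs : Summable fun n : ℕ => v (n + 1) x - v n x := by
      refine Summable.of_norm_bounded (g := fun n : ℕ => 2 * A * (1 / 2 : ℝ) ^ n)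
        (summable_geometric_two.mul_left _) fun n => (hd n x).trans_eq ?_
      rw [one_div, inv_pow, div_eq_mul_inv]
    rw [hs.hasSum_iff_tendsto_nat]
    simp only [Finset.sum_range_sub (fun n => v n x), hv0 0 rfl x, sub_zero]
    rw [tendsto_iff_norm_sub_tendsto_zero]
    refine squeeze_zero (fun _ => norm_nonneg _)
      (fun n => ((norm_sub_rev _ _).trans_le (huv n x)).trans_eq (?_ : _ = A * (1 / 2 : ℝ) ^ n)) ?_
    · rw [one_div, inv_pow, div_eq_mul_inv]
    · simpa using (tendsto_pow_atTop_nhds_zero_of_lt_one (r := (1 / 2 : ℝ)) (by norm_num)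
        (by norm_num)).const_mul A
  have hfin : ENNReal.ofReal (∑' n, ‖(c n : ℂ)‖) =
      ENNReal.ofReal (2 * D / (1 - b / 2) * A) := by
    rw [hcnorm, hcsum.tsum_eq]
  rw [← hfin]
  exact iInf₂_le_of_le (fun n => (c n : ℂ)) a <|
    iInf₂_le_of_le hatom (by rw [hcnorm]; exact hcsum.summable) <| iInf_le_of_le hsum le_rfl

omit [CompleteSpace H] in
/-- The zero function has vanishing atomic norm. -/
lemma UpNorm_zero {q : ℝ} (hq : 0 < q) {u : ℝ → H} (hu : ∀ x, u x = 0) : UpNorm q u = 0 := by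
  refine le_antisymm ?_ zero_le
  have hatom : ∀ _ : ℕ, IsUpAtom q (fun _ : ℝ => (0 : H)) := fun _ =>
    ⟨0, fun _ => 0, fun _ => 0, by simp, by simp [Real.zero_rpow hq.ne'], by simp⟩
  refine iInf₂_le_of_le (fun _ => 0) (fun _ _ => 0) <| iInf₂_le_of_le hatom
    (by simp) <| iInf_le_of_le (fun x => ?_) (by simp)
  simp only [hu, smul_zero]
  exact hasSum_zero

omit [InnerProductSpace ℂ H] [CompleteSpace H] in
/-- A finite `V^p` norm bounds the supremum and every variation sum, as real numbers. -/
lemma bounds_of_VpNorm {p : ℝ} (hp : 0 < p) {u : ℝ → H} (hV : VpNorm p u ≠ ∞) :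
    (∀ x, ‖u x‖ ≤ (VpNorm p u).toReal) ∧
      ∀ (N : ℕ) (t : ℕ → ℝ), StrictMono t →
        ∑ k ∈ Finset.range N, ‖u (t k) - u (t (k + 1))‖ ^ p ≤ (VpNorm p u).toReal ^ p := by
  have hpow : VpNorm p u ^ p = (⨆ t : ℝ, (‖u t‖₊ : ℝ≥0∞) ^ p) +
      ⨆ (N : ℕ) (t : ℕ → ℝ) (_ : StrictMono t),
        ∑ k ∈ Finset.range N, (‖u (t k) - u (t (k + 1))‖₊ : ℝ≥0∞) ^ p := by
    rw [VpNorm, ← ENNReal.rpow_mul, one_div_mul_cancel hp.ne', ENNReal.rpow_one]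
  have hfin : VpNorm p u ^ p ≠ ∞ := ENNReal.rpow_ne_top_of_nonneg hp.le hV
  constructor
  · intro x
    have h1 : (‖u x‖₊ : ℝ≥0∞) ^ p ≤ VpNorm p u ^ p := by
      rw [hpow]
      exact (le_iSup (fun t : ℝ => (‖u t‖₊ : ℝ≥0∞) ^ p) x).trans le_self_add
    have h2 := ENNReal.toReal_mono hV ((ENNReal.rpow_le_rpow_iff hp).1 h1)
    simpa using h2
  · intro N t ht
    have h1 : ∑ k ∈ Finset.range N, (‖u (t k) - u (t (k + 1))‖₊ : ℝ≥0∞) ^ p ≤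
        VpNorm p u ^ p := by
      rw [hpow]
      refine le_trans ?_ le_add_self
      exact le_iSup_of_le N (le_iSup₂_of_le t ht le_rfl)
    have h2 := ENNReal.toReal_mono hfin h1
    rw [ENNReal.toReal_sum fun k _ => ENNReal.rpow_ne_top_of_nonneg hp.le ENNReal.coe_ne_top,
      ← ENNReal.toReal_rpow] at h2
    simpa only [← ENNReal.toReal_rpow, ENNReal.coe_toReal, coe_nnnorm] using h2

/-- Embedding of the variation space into the larger atomic space: for `1 ≤ p < q < ∞`,
every right-continuous `u` with bounded `p`-variation and `u(t) → 0` as `t → -∞` belongs to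
`U^q(ℝ;H)` with `‖u‖_{U^q} ≤ C(p,q) ‖u‖_{V^p}`. -/
theorem Vp_subset_Uq (p q : ℝ) (hp1 : 1 ≤ p) (hpq : p < q) :
    ∃ C : ℝ, 0 < C ∧ ∀ u : ℝ → H,
      (∀ t : ℝ, ContinuousWithinAt u (Set.Ici t) t) →
      Tendsto u atBot (𝓝 (0 : H)) →
      VpNorm p u ≠ ∞ →
      UpNorm q u ≠ ∞ ∧ UpNorm q u ≤ ENNReal.ofReal C * VpNorm p u := by
  have hp0 : 0 < p := by linarith
  have hq0 : 0 < q := by linarith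
  have hb2 : 0 < 1 - (2 : ℝ) ^ (p / q) / 2 := by
    have : (2 : ℝ) ^ (p / q) < 2 ^ (1 : ℝ) :=
      Real.rpow_lt_rpow_of_exponent_lt (by norm_num) ((div_lt_one hq0).2 hpq)
    rw [Real.rpow_one] at this
    linarith
  have hC : 0 < 2 * ((4 : ℝ) ^ (1 / q) * 2 ^ (p / q)) / (1 - (2 : ℝ) ^ (p / q) / 2) := by
    positivity
  refine ⟨_, hC, fun u hrc hlim hV => ?_⟩
  obtain ⟨hsup, hK⟩ := bounds_of_VpNorm hp0 hV
  rcases (ENNReal.toReal_nonneg (a := VpNorm p u)).eq_or_lt with hA | hA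
  · have hu : ∀ x, u x = 0 := fun x => norm_le_zero_iff.1 ((hsup x).trans hA.symm.le)
    rw [UpNorm_zero hq0 hu]
    exact ⟨ENNReal.zero_ne_top, zero_le⟩
  · have h := UpNorm_le_of_bounds hp1 hpq hA hrc hlim hsup hK
    refine ⟨ne_top_of_le_ne_top ENNReal.ofReal_ne_top h, ?_⟩
    rwa [ENNReal.ofReal_mul hC.le, ENNReal.ofReal_toReal hV] at h
end
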